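/- With p_k = ∫_0^{1/e} (c^{k-1} k^k / k!) e^{−T(c)+c} dc, we have p_k = (1+o(1)) · e^{−1+1/e} / (√(2π) · k^{3/2}) as k → ∞. -/

import Mathlib

open Real Filter

/-- The tree function `T(z) = Σ_{k≥1} k^{k-1} z^k / k!`. -/
noncomputable def treeFun (z : ℝ) : ℝ :=
  ∑' k : ℕ, ((k + 1 : ℕ) : ℝ) ^ k * z ^ (k + 1) / ((k + 1).factorial : ℝ)

/-- The limiting probability that the min mean-weight cycle in the directed complete
graph has length `k`. -/
noncomputable def pLen (k : ℕ) : ℝ :=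
  ∫ c in (0 : ℝ)..(1 / Real.exp 1),
    c ^ (k - 1) * (k : ℝ) ^ k / (k.factorial : ℝ) * Real.exp (-treeFun c + c)

/-!
Expanding the exponentials in `T(x e⁻ˣ) = ∑ₖ (k+1)ᵏ/(k+1)! · xᵏ⁺¹ e^{-(k+1)x}` and collecting powers
of `x`, the coefficient of `xⁿ⁺¹` is an `(n+1)`-st finite difference of `t ↦ tⁿ`, so it vanishes for
`n ≥ 1` and `T(x e⁻ˣ) = x` near `0`. By analyticity the identity persists on `[0, 1)`, by continuity
on `[0, 1]`; at `x = 1` it gives `T(1/e) = 1`.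

In `pₖ` the weight `cᵏ⁻¹` concentrates at the right endpoint `1/e`, so the remaining factor
`e^{-T(c)+c}` may be replaced by its value `e^{-1+1/e}` there. What is left is `kᵏ⁻¹ e⁻ᵏ / k!`, the
`k`-th term of the series `T(1/e)`, which Stirling's formula evaluates; the same estimate makes the
tree series converge on the closed disc of radius `1/e`.
-/

open Set Asymptotics
open scoped Topology

section General

theorem analyticOnNhd_tsum_mul_pow {𝕜 : Type*} [NontriviallyNormedField 𝕜] [CompleteSpace 𝕜]
    {a : ℕ → 𝕜} {r : ℝ} (ha : Summable fun k ↦ ‖a k‖ * r ^ k) :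
    AnalyticOnNhd 𝕜 (fun z ↦ ∑' k, a k * z ^ k) (Metric.ball 0 r) := by
  intro z hz
  have hr : 0 < r := Metric.pos_of_mem_ball hz
  lift r to NNReal using hr.le
  let p := FormalMultilinearSeries.ofScalars 𝕜 a
  have hrp : (r : ENNReal) ≤ p.radius :=
    p.le_radius_of_summable <| by simpa only [p, FormalMultilinearSeries.ofScalars_norm] using ha
  have hp : p.sum = fun z ↦ ∑' k, a k * z ^ k :=
    FormalMultilinearSeries.ofScalarsSum_eq_tsum (E := 𝕜) a
  rw [← hp]
  refine (p.hasFPowerSeriesOnBall ?_).analyticAt_of_mem (Metric.eball_subset_eball hrp ?_)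
  · exact (ENNReal.coe_pos.2 hr).trans_le hrp
  · rwa [Metric.eball_coe]

theorem tsum_prod_eq_tsum_sum_antidiagonal {A α : Type*} [AddMonoid A] [Finset.HasAntidiagonal A]
    [AddCommGroup α] [UniformSpace α] [IsUniformAddGroup α] [CompleteSpace α] [T2Space α]
    {f : A × A → α} (hf : Summable f) :
    ∑' p, f p = ∑' n, ∑ p ∈ Finset.HasAntidiagonal.antidiagonal n, f p := by
  let e := Finset.HasAntidiagonal.sigmaAntidiagonalEquivProd (A := A)
  rw [← e.tsum_eq f]
  refine (e.summable_iff.2 hf).tsum_sigma.trans (tsum_congr fun n ↦ ?_)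
  rw [tsum_fintype]
  exact Finset.sum_coe_sort _ f

theorem sum_range_neg_one_pow_mul_choose_mul_pow_eq_zero {R : Type*} [CommRing R] {m n : ℕ}
    (h : m < n) :
    ∑ k ∈ Finset.range (n + 1), (-1) ^ (n - k) * (n.choose k : R) * (k : R) ^ m = 0 := by
  have hdiff := fwdDiff_iter_eq_sum_shift (1 : R) (fun t ↦ t ^ m) n 0
  rw [fwdDiff_iter_pow_eq_zero_of_lt h] at hdiff
  simpa using hdiff.symm

theorem tendsto_smul_intervalIntegral_pow_smul {E : Type*} [NormedAddCommGroup E] [NormedSpace ℝ E]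
    [CompleteSpace E] {a : ℝ} (ha : 0 < a) {g : ℝ → E} (hg : ContinuousOn g (Icc 0 a)) :
    Tendsto (fun n : ℕ ↦ ((n + 1) / a ^ (n + 1)) • ∫ x in 0..a, x ^ n • g x) atTop (𝓝 (g a)) := by
  have hpeak := tendsto_setIntegral_pow_smul_of_unique_maximum_of_isCompact_of_continuousOn
    (μ := MeasureTheory.volume) isCompact_Icc continuousOn_id
    (fun y hy hne ↦ hy.2.lt_of_ne hne) (fun x hx ↦ hx.1) ha
    (by simp [interior_Icc, closure_Ioo ha.ne, ha.le]) hg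
  simpa [MeasureTheory.integral_Icc_eq_integral_Ioc, ← intervalIntegral.integral_of_le ha.le]
    using hpeak

theorem isEquivalent_pow_self_div_factorial :
    (fun n : ℕ ↦ (n : ℝ) ^ n / n.factorial) ~[atTop]
      fun n ↦ Real.exp n / √(2 * π * n) := by
  refine ((IsEquivalent.refl (u := fun n : ℕ ↦ (n : ℝ) ^ n)).div
    Stirling.factorial_isEquivalent_stirling).congr_right ?_
  filter_upwards [eventually_ne_atTop 0] with n hn
  rw [← Real.exp_one_pow, mul_right_comm]
  have : (n : ℝ) ≠ 0 := by exact_mod_cast hn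
  simp only [Pi.div_apply, div_pow]
  field_simp

theorem mul_exp_neg_lt_exp_neg_one {x : ℝ} (hx : x ≠ 1) : x * Real.exp (-x) < Real.exp (-1) := by
  have h : x < Real.exp (x - 1) := by linarith [Real.add_one_lt_exp (sub_ne_zero.2 hx)]
  calc x * Real.exp (-x) < Real.exp (x - 1) * Real.exp (-x) := by gcongr
    _ = Real.exp (-1) := by rw [← Real.exp_add]; ring_nf

end General

section TreeSeries

/-- The coefficient of `zᵏ⁺¹` in the tree function `T(z)`. The index is shifted by one, as in
`treeFun`, so that `T(z) = z · ∑ₖ treeCoeff k · zᵏ`. -/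
noncomputable def treeCoeff (k : ℕ) : ℝ :=
  ((k + 1 : ℕ) : ℝ) ^ k / (k + 1).factorial

theorem treeCoeff_nonneg (k : ℕ) : 0 ≤ treeCoeff k := by
  unfold treeCoeff; positivity

theorem treeFun_eq_tsum (z : ℝ) : treeFun z = ∑' k, treeCoeff k * z ^ (k + 1) :=
  tsum_congr fun _ ↦ mul_div_right_comm _ _ _

theorem isEquivalent_treeCoeff_mul_exp_neg_one_pow :
    (fun n ↦ treeCoeff n * Real.exp (-1) ^ (n + 1)) ~[atTop]
      fun n ↦ (√(2 * π) * ((n + 1 : ℕ) : ℝ) ^ (3 / 2 : ℝ))⁻¹ := by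
  have hstirling := (isEquivalent_pow_self_div_factorial.comp_tendsto (tendsto_add_atTop_nat 1)).mul
    (IsEquivalent.refl (u := fun n : ℕ ↦ Real.exp (-1) ^ (n + 1) / ((n + 1 : ℕ) : ℝ)))
  refine (hstirling.congr_left (.of_eq ?_)).congr_right (.of_eq ?_)
  · ext n
    simp only [Pi.mul_apply, Function.comp_apply, treeCoeff, pow_succ _ n]
    field_simp
  · ext n
    have hpow : ((n + 1 : ℕ) : ℝ) ^ (3 / 2 : ℝ) = (n + 1 : ℕ) * √(n + 1 : ℕ) := by
      rw [show (3 / 2 : ℝ) = 1 + 1 / 2 by norm_num, rpow_add (by positivity), rpow_one,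
        ← sqrt_eq_rpow]
    have hexp : Real.exp (n + 1 : ℕ) * Real.exp (-1) ^ (n + 1) = 1 := by
      rw [← Real.exp_nat_mul, ← Real.exp_add]; simp
    rw [hpow]
    simp only [Pi.mul_apply, Function.comp_apply, Real.sqrt_mul (show 0 ≤ 2 * π by positivity)]
    field_simp
    exact hexp

theorem summable_treeCoeff_mul_exp_neg_one_pow :
    Summable fun k ↦ treeCoeff k * Real.exp (-1) ^ (k + 1) := by
  refine summable_of_isEquivalent_nat ?_ isEquivalent_treeCoeff_mul_exp_neg_one_pow
  simp only [mul_inv]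
  exact ((summable_nat_add_iff 1).2
    (Real.summable_nat_rpow_inv.2 (by norm_num : (1 : ℝ) < 3 / 2))).mul_left _

theorem norm_treeCoeff_mul_pow_le {z : ℝ} (hz : |z| ≤ Real.exp (-1)) (k : ℕ) :
    ‖treeCoeff k * z ^ (k + 1)‖ ≤ treeCoeff k * Real.exp (-1) ^ (k + 1) := by
  rw [norm_mul, norm_pow, Real.norm_of_nonneg (treeCoeff_nonneg k), Real.norm_eq_abs]
  gcongr
  exact treeCoeff_nonneg k

theorem summable_treeCoeff_mul_pow {z : ℝ} (hz : |z| ≤ Real.exp (-1)) :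
    Summable fun k ↦ treeCoeff k * z ^ (k + 1) :=
  .of_norm_bounded summable_treeCoeff_mul_exp_neg_one_pow (norm_treeCoeff_mul_pow_le hz)

theorem continuousOn_treeFun :
    ContinuousOn treeFun (Icc (-Real.exp (-1)) (Real.exp (-1))) := by
  rw [funext treeFun_eq_tsum]
  exact continuousOn_tsum (fun k ↦ by fun_prop) summable_treeCoeff_mul_exp_neg_one_pow
    fun k z hz ↦ norm_treeCoeff_mul_pow_le (abs_le.2 hz) k

theorem analyticOnNhd_treeFun : AnalyticOnNhd ℝ treeFun (Metric.ball 0 (Real.exp (-1))) := by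
  have hfactor : treeFun = fun z ↦ z * ∑' k, treeCoeff k * z ^ k := by
    ext z
    rw [treeFun_eq_tsum, ← tsum_mul_left]
    exact tsum_congr fun k ↦ by ring
  rw [hfactor]
  refine analyticOnNhd_id.mul (analyticOnNhd_tsum_mul_pow ?_)
  refine (summable_treeCoeff_mul_exp_neg_one_pow.mul_right (Real.exp 1)).congr fun k ↦ ?_
  have hexp : Real.exp (-1) * Real.exp 1 = 1 := by rw [← Real.exp_add]; simp
  rw [Real.norm_of_nonneg (treeCoeff_nonneg k), pow_succ, mul_assoc, mul_assoc, hexp, mul_one]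

end TreeSeries

section FunctionalEquation

/-- The general term of the double series for `T(x eˢ)` obtained by expanding each
`(x eˢ)ᵏ⁺¹ = xᵏ⁺¹ e^{(k+1)s}` in powers of `s`; the pair is `(k, power of s)`. -/
noncomputable def treeExpTerm (x s : ℝ) (p : ℕ × ℕ) : ℝ :=
  treeCoeff p.1 * x ^ (p.1 + 1) * ((((p.1 + 1 : ℕ) : ℝ) * s) ^ p.2 / p.2.factorial)

theorem norm_treeExpTerm (x s : ℝ) (p : ℕ × ℕ) : ‖treeExpTerm x s p‖ = treeExpTerm |x| |s| p := by
  simp [treeExpTerm, treeCoeff, -Nat.cast_add]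

theorem hasSum_treeExpTerm (x s : ℝ) (k : ℕ) :
    HasSum (fun m ↦ treeExpTerm x s (k, m)) (treeCoeff k * (x * Real.exp s) ^ (k + 1)) := by
  have hexp := NormedSpace.expSeries_div_hasSum_exp (((k + 1 : ℕ) : ℝ) * s)
  rw [← Real.exp_eq_exp_ℝ, Real.exp_nat_mul] at hexp
  rw [mul_pow, ← mul_assoc]
  exact hexp.mul_left _

theorem summable_treeExpTerm {x s : ℝ} (h : |x| * Real.exp |s| ≤ Real.exp (-1)) :
    Summable (treeExpTerm x s) := by
  refine .of_norm ((summable_prod_of_nonneg fun _ ↦ norm_nonneg _).2 ?_)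
  simp only [norm_treeExpTerm, (hasSum_treeExpTerm _ _ _).tsum_eq]
  refine ⟨fun k ↦ (hasSum_treeExpTerm _ _ k).summable, summable_treeCoeff_mul_pow ?_⟩
  rwa [abs_of_nonneg (by positivity)]

theorem tsum_treeExpTerm {x s : ℝ} (h : |x| * Real.exp |s| ≤ Real.exp (-1)) :
    ∑' p, treeExpTerm x s p = treeFun (x * Real.exp s) := by
  rw [(summable_treeExpTerm h).tsum_prod, treeFun_eq_tsum]
  exact tsum_congr fun k ↦ (hasSum_treeExpTerm x s k).tsum_eq

theorem treeExpTerm_neg_eq_mul_choose (x : ℝ) {n k : ℕ} (hk : k ≤ n) :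
    treeExpTerm x (-x) (k, n - k) = x ^ (n + 1) / (n + 1).factorial *
      ((-1) ^ (n - k) * (n + 1).choose (k + 1) * ((k + 1 : ℕ) : ℝ) ^ n) := by
  obtain ⟨m, rfl⟩ := Nat.exists_eq_add_of_le hk
  rw [Nat.cast_choose ℝ (by lia), show k + m + 1 - (k + 1) = m by lia, Nat.add_sub_cancel_left]
  simp only [treeExpTerm, treeCoeff, mul_neg, ← neg_one_mul (_ * x), mul_pow, pow_add, pow_one]
  field_simp

theorem sum_antidiagonal_treeExpTerm_neg (x : ℝ) (n : ℕ) :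
    ∑ p ∈ Finset.HasAntidiagonal.antidiagonal n, treeExpTerm x (-x) p = if n = 0 then x else 0 := by
  split_ifs with hn
  · subst hn
    simp [treeExpTerm, treeCoeff]
  have hdiff := sum_range_neg_one_pow_mul_choose_mul_pow_eq_zero (R := ℝ) n.lt_add_one
  rw [Finset.sum_range_succ', Nat.cast_zero, zero_pow hn, mul_zero, add_zero] at hdiff
  simp only [Nat.add_sub_add_right] at hdiff
  rw [Finset.Nat.sum_antidiagonal_eq_sum_range_succ_mk, Finset.sum_congr rfl fun k hk ↦
    treeExpTerm_neg_eq_mul_choose x (Finset.mem_range_succ_iff.1 hk), ← Finset.mul_sum, hdiff,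
    mul_zero]

theorem treeFun_mul_exp_neg_of_abs_mul_exp_abs_le {x : ℝ} (h : |x| * Real.exp |x| ≤ Real.exp (-1)) :
    treeFun (x * Real.exp (-x)) = x := by
  have hneg : |x| * Real.exp |-x| ≤ Real.exp (-1) := by rwa [abs_neg]
  rw [← tsum_treeExpTerm hneg, tsum_prod_eq_tsum_sum_antidiagonal (summable_treeExpTerm hneg)]
  simp only [sum_antidiagonal_treeExpTerm_neg, tsum_ite_eq]

theorem treeFun_mul_exp_neg {x : ℝ} (hx : x ∈ Icc 0 1) : treeFun (x * Real.exp (-x)) = x := by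
  have hanalytic : AnalyticOnNhd ℝ (fun x ↦ treeFun (x * Real.exp (-x))) (Ico 0 1) := fun x hx ↦ by
    refine (analyticOnNhd_treeFun _ ?_).fun_comp (by fun_prop)
    rw [mem_ball_zero_iff, Real.norm_of_nonneg (mul_nonneg hx.1 (Real.exp_nonneg _))]
    exact mul_exp_neg_lt_exp_neg_one hx.2.ne
  have hnear : (fun x ↦ treeFun (x * Real.exp (-x))) =ᶠ[𝓝 0] id := by
    have hsmall : ∀ᶠ x in 𝓝 (0 : ℝ), |x| * Real.exp |x| < Real.exp (-1) :=
      ContinuousAt.eventually_lt (by fun_prop) continuousAt_const (by simp [Real.exp_pos])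
    filter_upwards [hsmall] with x hx using treeFun_mul_exp_neg_of_abs_mul_exp_abs_le hx.le
  have hIco : EqOn (fun x ↦ treeFun (x * Real.exp (-x))) id (Ico 0 1) :=
    hanalytic.eqOn_of_preconnected_of_eventuallyEq analyticOnNhd_id isPreconnected_Ico
      (left_mem_Ico.2 one_pos) hnear
  have hcont : ContinuousOn (fun x ↦ treeFun (x * Real.exp (-x))) (Icc 0 1) := by
    refine continuousOn_treeFun.comp (by fun_prop) fun x hx ↦ ⟨?_, mul_exp_neg_le_exp_neg_one x⟩
    have := hx.1
    exact (neg_nonpos.2 (Real.exp_nonneg _)).trans (by positivity)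
  exact hIco.of_subset_closure hcont continuousOn_id Ico_subset_Icc_self
    (closure_Ico zero_ne_one).ge hx

theorem treeFun_exp_neg_one : treeFun (Real.exp (-1)) = 1 := by
  simpa using treeFun_mul_exp_neg (right_mem_Icc.2 zero_le_one)

end FunctionalEquation

section CycleLength

theorem pLen_succ (n : ℕ) :
    pLen (n + 1) = treeCoeff n * Real.exp (-1) ^ (n + 1) *
      ((n + 1) / Real.exp (-1) ^ (n + 1) *
        ∫ c in 0..Real.exp (-1), c ^ n * Real.exp (-treeFun c + c)) := by
  have hint : pLen (n + 1) = treeCoeff n * (n + 1) *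
      ∫ c in 0..Real.exp (-1), c ^ n * Real.exp (-treeFun c + c) := by
    rw [pLen, one_div, ← Real.exp_neg, ← intervalIntegral.integral_const_mul]
    refine intervalIntegral.integral_congr fun c _ ↦ ?_
    simp only [treeCoeff, Nat.add_sub_cancel, pow_succ _ n]
    push_cast
    ring
  rw [hint]
  field_simp

theorem isEquivalent_pLen_succ :
    (fun n ↦ pLen (n + 1)) ~[atTop]
      fun n ↦ treeCoeff n * Real.exp (-1) ^ (n + 1) * Real.exp (-1 + Real.exp (-1)) := by
  have hcont : ContinuousOn (fun c ↦ Real.exp (-treeFun c + c)) (Icc 0 (Real.exp (-1))) :=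
    ((continuousOn_treeFun.mono (Icc_subset_Icc_left (by simp [Real.exp_nonneg]))).neg.add
      continuousOn_id).rexp
  have hpeak := tendsto_smul_intervalIntegral_pow_smul (Real.exp_pos (-1)) hcont
  rw [treeFun_exp_neg_one] at hpeak
  simp only [smul_eq_mul] at hpeak
  simp only [pLen_succ]
  exact IsEquivalent.refl.mul ((isEquivalent_const_iff_tendsto (Real.exp_ne_zero _)).2 hpeak)

end CycleLength

/-- `p_k = (1+o(1)) · e^{−1+1/e} / (√(2π) k^{3/2})` as `k → ∞`. -/
theorem pLen_asymp :
    Tendsto (fun k : ℕ =>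
        pLen k / (Real.exp (-1 + 1 / Real.exp 1) / (Real.sqrt (2 * π) * (k : ℝ) ^ (3 / 2 : ℝ))))
      atTop (nhds 1) := by
  have hequiv : (fun n ↦ pLen (n + 1)) ~[atTop] fun n ↦
      Real.exp (-1 + 1 / Real.exp 1) / (√(2 * π) * ((n + 1 : ℕ) : ℝ) ^ (3 / 2 : ℝ)) := by
    rw [one_div, ← Real.exp_neg]
    simp only [div_eq_inv_mul (Real.exp _)]
    exact isEquivalent_pLen_succ.trans
      (isEquivalent_treeCoeff_mul_exp_neg_one_pow.mul IsEquivalent.refl)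
  rw [← tendsto_add_atTop_iff_nat 1]
  exact (isEquivalent_iff_tendsto_one (.of_forall fun n ↦ by positivity)).1 hequiv
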